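/- Let (A, ≺_{α,β}, ≻_{α,β}, Ω) be an Ω-relative pre-anti-flexible algebra. Define, for all (α,β) ∈ Ω² and x, y ∈ A, x ◀_{α,β} y := x ≺_{α,β} y − y ≻_{β,α} x. Then (A, ◀_{α,β}, Ω) is an Ω-relative right pre-Lie algebra, i.e. (x ◀_{α,β} y) ◀_{αβ,γ} z − x ◀_{α,βγ} (y ◀_{β,γ} z) = (x ◀_{α,γ} z) ◀_{αγ,β} y − x ◀_{α,γβ} (z ◀_{γ,β} y) for all x, y, z ∈ A and α, β, γ ∈ Ω. -/

import Mathlib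

/-!
The associator of `x ◀ y = x ≺ y - y ≻ x` splits into the left, middle and right associators of
the pair `(≺, ≻)` and a remainder:
`(x, y, z)_◀ = (x, y, z)_r - (z, y, x)_l - (y, x, z)_m + (symmetric in y and z)`.
One pre-anti-flexible axiom says `(z, y, x)_l = (x, y, z)_r` and cancels the first two terms; the
other one says `(y, x, z)_m = (z, x, y)_m`, so that what remains is symmetric in `y` and `z`.
-/

section Definitions

variable {k Ω A : Type*} [CommSemiring k] [Mul Ω] [AddCommGroup A] [Module k A]

/-- The associator `(x ∗_{α,β} y) ∗_{αβ,γ} z - x ∗_{α,βγ} (y ∗_{β,γ} z)` of a family of bilinear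
operations `op α β = ∗_{α,β}`, whose vanishing is relative associativity. -/
def relativeAssociator (op : Ω → Ω → A →ₗ[k] A →ₗ[k] A) (α β γ : Ω) (x y z : A) : A :=
  op (α * β) γ (op α β x y) z - op α (β * γ) x (op β γ y z)

/-- An `Ω`-relative right pre-Lie structure on the module `A`: the associator is symmetric in its
last two arguments, taken together with their indices. -/
def IsRelativeRightPreLie (op : Ω → Ω → A →ₗ[k] A →ₗ[k] A) : Prop :=
  ∀ (α β γ : Ω) (x y z : A),
    relativeAssociator op α β γ x y z = relativeAssociator op α γ β x z y

variable (prec succ : Ω → Ω → A →ₗ[k] A →ₗ[k] A)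

/-- The associator `(x, y, z)_l` of `prec = ≺` and `succ = ≻`, in which both outer operations are
`≻`; its vanishing is one of the dendriform axioms. -/
def leftRelativeAssociator (α β γ : Ω) (x y z : A) : A :=
  succ (α * β) γ (prec α β x y + succ α β x y) z - succ α (β * γ) x (succ β γ y z)

/-- The associator `(x, y, z)_m` of `prec = ≺` and `succ = ≻`, in which `≻` joins `x` to `y` and
`≺` joins `y` to `z`; its vanishing is one of the dendriform axioms. -/
def middleRelativeAssociator (α β γ : Ω) (x y z : A) : A :=
  prec (α * β) γ (succ α β x y) z - succ α (β * γ) x (prec β γ y z)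

/-- The associator `(x, y, z)_r` of `prec = ≺` and `succ = ≻`, in which both outer operations are
`≺`; its vanishing is one of the dendriform axioms. -/
def rightRelativeAssociator (α β γ : Ω) (x y z : A) : A :=
  prec (α * β) γ (prec α β x y) z - prec α (β * γ) x (prec β γ y z + succ β γ y z)

/-- An `Ω`-relative pre-anti-flexible structure on the module `A`, with `prec = ≺` and
`succ = ≻`: reversing the arguments and their indices fixes the middle associator and exchanges
the left and right ones. -/
structure IsRelativePreAntiFlexible : Prop where
  middle_reverse (α β γ : Ω) (x y z : A) :
    middleRelativeAssociator prec succ α β γ x y z =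
      middleRelativeAssociator prec succ γ β α z y x
  left_eq_right_reverse (α β γ : Ω) (x y z : A) :
    leftRelativeAssociator prec succ α β γ x y z =
      rightRelativeAssociator prec succ γ β α z y x

/-- The family of products `x ◀_{α,β} y = x ≺_{α,β} y - y ≻_{β,α} x`, bundled as bilinear maps. -/
def relativePreLieProduct (α β : Ω) : A →ₗ[k] A →ₗ[k] A :=
  prec α β - (succ β α).flip

/-- The part of the associator of `◀` that is symmetric in its last two arguments for every pair
of families `prec = ≺` and `succ = ≻`. -/
def relativePreLieSymmetricPart (α β γ : Ω) (x y z : A) : A :=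
  prec α (β * γ) x (succ β γ y z + succ γ β z y) +
      succ (β * γ) α (prec β γ y z + prec γ β z y) x -
    (succ β (α * γ) y (prec α γ x z) + succ γ (α * β) z (prec α β x y))

end Definitions

section PreLieProduct

variable {k Ω A : Type*} [CommSemiring k] [CommMagma Ω] [AddCommGroup A] [Module k A]

theorem relativePreLieSymmetricPart_swap (prec succ : Ω → Ω → A →ₗ[k] A →ₗ[k] A)
    (α β γ : Ω) (x y z : A) :
    relativePreLieSymmetricPart prec succ α β γ x y z =
      relativePreLieSymmetricPart prec succ α γ β x z y := by
  simp only [relativePreLieSymmetricPart, mul_comm γ β, add_comm]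

theorem relativeAssociator_relativePreLieProduct (prec succ : Ω → Ω → A →ₗ[k] A →ₗ[k] A)
    (α β γ : Ω) (x y z : A) :
    relativeAssociator (relativePreLieProduct prec succ) α β γ x y z =
      rightRelativeAssociator prec succ α β γ x y z -
          leftRelativeAssociator prec succ γ β α z y x -
        middleRelativeAssociator prec succ β α γ y x z +
      relativePreLieSymmetricPart prec succ α β γ x y z := by
  simp only [relativeAssociator, relativePreLieProduct, rightRelativeAssociator,
    leftRelativeAssociator, middleRelativeAssociator, relativePreLieSymmetricPart,
    mul_comm β α, mul_comm γ β, map_add, map_sub, LinearMap.add_apply, LinearMap.sub_apply,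
    LinearMap.flip_apply]
  abel

theorem relativePreAntiFlexible_to_relativeRightPreLie_general
    {prec succ : Ω → Ω → A →ₗ[k] A →ₗ[k] A} (h : IsRelativePreAntiFlexible prec succ) :
    IsRelativeRightPreLie (relativePreLieProduct prec succ) := by
  have associator_eq (α β γ : Ω) (x y z : A) :
      relativeAssociator (relativePreLieProduct prec succ) α β γ x y z =
        relativePreLieSymmetricPart prec succ α β γ x y z -
          middleRelativeAssociator prec succ β α γ y x z := by
    rw [relativeAssociator_relativePreLieProduct, h.left_eq_right_reverse]
    abel
  intro α β γ x y z
  rw [associator_eq, associator_eq, relativePreLieSymmetricPart_swap, h.middle_reverse]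

end PreLieProduct

/-- `x ◀_{α,β} y := x ≺_{α,β} y − y ≻_{β,α} x` turns an Ω-relative
pre-anti-flexible algebra into an Ω-relative right pre-Lie algebra. -/
theorem relativePreAntiFlexible_to_relativeRightPreLie
    (k : Type*) [Field k] (Ω : Type*) [CommSemigroup Ω]
    (A : Type*) [AddCommGroup A] [Module k A]
    (prec succ : Ω → Ω → A →ₗ[k] A →ₗ[k] A)
    (h1 : ∀ (α β γ : Ω) (x y z : A),
      prec (α * β) γ (succ α β x y) z - succ α (β * γ) x (prec β γ y z) =
        prec (γ * β) α (succ γ β z y) x - succ γ (β * α) z (prec β α y x))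
    (h2 : ∀ (α β γ : Ω) (x y z : A),
      succ (α * β) γ (prec α β x y + succ α β x y) z - succ α (β * γ) x (succ β γ y z) =
        prec (γ * β) α (prec γ β z y) x - prec γ (β * α) z (prec β α y x + succ β α y x))
    (tril : Ω → Ω → A → A → A)
    (htril : ∀ (α β : Ω) (x y : A), tril α β x y = prec α β x y - succ β α y x) :
    ∀ (α β γ : Ω) (x y z : A),
      tril (α * β) γ (tril α β x y) z - tril α (β * γ) x (tril β γ y z) =
        tril (α * γ) β (tril α γ x z) y - tril α (γ * β) x (tril γ β z y) := by
  obtain rfl : tril = fun α β x y ↦ relativePreLieProduct prec succ α β x y := by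
    ext α β x y
    exact htril α β x y
  exact relativePreAntiFlexible_to_relativeRightPreLie_general ⟨h1, h2⟩
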